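/- Let σ > 0 and let ε₀ be a real random variable such that ε₀/σ has a continuous cumulative distribution function F. For each n ∈ ℕ let Dₙ and Sₙ be real random variables defined on the same probability space as ε₀, with Sₙ ≥ 0, Dₙ → 0 in probability and Sₙ → σ in probability as n → ∞. Fix α ∈ (0,1) and real numbers q_l < q_u with F(q_l) = α/2 and F(q_u) = 1 − α/2. Then ℙ[ q_l·Sₙ ≤ ε₀ + Dₙ ≤ q_u·Sₙ ] → 1 − α as n → ∞. -/

import Mathlib

open MeasureTheory ProbabilityTheory Filter

/-!
Convergence of real numbers may be checked along subsequences, and every subsequence has a further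
one along which `D` and `S` converge almost surely. There, at almost every `ω`, the event
`ql * S n ≤ ε₀ + D n ≤ qu * S n` eventually agrees with the limit event
`ql ≤ ε₀ / σ ≤ qu`: each limit inequality holds or fails strictly, except where `ε₀ / σ` equals `ql`
or `qu`, and this has probability zero because `F` is continuous. Dominated convergence then gives
convergence of the probabilities to that of the limit event, `F qu - F ql = 1 - α`.
-/

/-- A probability measure on `ℝ` with continuous cdf has no atoms, so its mass on a closed interval
is the increment of the cdf. -/
lemma noAtoms_and_Icc_of_continuous_cdf (μ : Measure ℝ) [IsProbabilityMeasure μ]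
    (h : Continuous (cdf μ)) :
    (∀ x, μ {x} = 0) ∧ ∀ a b, a ≤ b → (μ (Set.Icc a b)).toReal = cdf μ b - cdf μ a := by
  have hl : ∀ x, Function.leftLim (cdf μ) x = cdf μ x := fun x =>
    (h.continuousWithinAt).leftLim_eq
  constructor
  · intro x
    rw [← measure_cdf μ, StieltjesFunction.measure_singleton, hl]
    simp
  · intro a b hab
    rw [← measure_cdf μ, StieltjesFunction.measure_Icc, measure_cdf, hl]
    exact ENNReal.toReal_ofReal (sub_nonneg.2 (monotone_cdf μ hab))

/-- Pointwise form of the limit: away from the two endpoints, membership in the interval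
is eventually constant. -/
lemma eventually_mem_interval_iff {σ e ql qu : ℝ} (hσ : 0 < σ) (hl : e / σ ≠ ql)
    (hu : e / σ ≠ qu) {d s : ℕ → ℝ} (hd : Tendsto d atTop (nhds 0))
    (hs : Tendsto s atTop (nhds σ)) :
    ∀ᶠ n in atTop, (ql * s n ≤ e + d n ∧ e + d n ≤ qu * s n) ↔ (ql ≤ e / σ ∧ e / σ ≤ qu) := by
  have hed : Tendsto (fun n => e + d n) atTop (nhds e) := by
    simpa using hd.const_add e
  have hls := hs.const_mul ql
  have hus := hs.const_mul qu
  rw [le_div_iff₀ hσ, div_le_iff₀ hσ]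
  rw [Ne, div_eq_iff hσ.ne'] at hl hu
  have h1 : ∀ᶠ n in atTop, (ql * s n ≤ e + d n ↔ ql * σ ≤ e) := by
    rcases lt_or_gt_of_ne hl with h | h
    · filter_upwards [hed.eventually_lt hls h] with n hn
      exact iff_of_false hn.not_ge h.not_ge
    · filter_upwards [hls.eventually_lt hed h] with n hn
      exact iff_of_true hn.le h.le
  have h2 : ∀ᶠ n in atTop, (e + d n ≤ qu * s n ↔ e ≤ qu * σ) := by
    rcases lt_or_gt_of_ne hu with h | h
    · filter_upwards [hed.eventually_lt hus h] with n hn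
      exact iff_of_true hn.le h.le
    · filter_upwards [hus.eventually_lt hed h] with n hn
      exact iff_of_false hn.not_ge h.not_ge
  filter_upwards [h1, h2] with n a b
  rw [a, b]

/-- Asymptotic type-I validity of the parametric prediction interval:
if the learner is consistent (`Dₙ →ᵖ 0`), the residual sd estimator is consistent
(`Sₙ →ᵖ σ`) and the standardized residual `ε₀/σ` has continuous cdf `F`, then the
interval with quantiles `q_l < q_u` satisfying `F q_l = α/2`, `F q_u = 1 - α/2`
has asymptotic coverage `1 - α`. -/
theorem parametric_interval_type_I_valid
    {Ω : Type*} [MeasurableSpace Ω] (P : Measure Ω) [IsProbabilityMeasure P]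
    (σ : ℝ) (hσ : 0 < σ)
    (ε₀ : Ω → ℝ) (hε₀ : Measurable ε₀)
    (F : ℝ → ℝ) (hF : ∀ x, F x = (P {ω | ε₀ ω / σ ≤ x}).toReal)
    (hFcont : Continuous F)
    (D S : ℕ → Ω → ℝ) (hD : ∀ n, Measurable (D n)) (hS : ∀ n, Measurable (S n))
    (hSnonneg : ∀ n ω, 0 ≤ S n ω)
    (hDconv : TendstoInMeasure P D atTop (fun _ => (0 : ℝ)))
    (hSconv : TendstoInMeasure P S atTop (fun _ => σ))
    (α : ℝ) (hα : α ∈ Set.Ioo (0 : ℝ) 1)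
    (ql qu : ℝ) (hq : ql < qu) (hFl : F ql = α / 2) (hFu : F qu = 1 - α / 2) :
    Tendsto
      (fun n => (P {ω | ql * S n ω ≤ ε₀ ω + D n ω ∧ ε₀ ω + D n ω ≤ qu * S n ω}).toReal)
      atTop (nhds (1 - α)) := by
  have hm : Measurable (fun ω => ε₀ ω / σ) := hε₀.div_const σ
  set μ : Measure ℝ := P.map (fun ω => ε₀ ω / σ) with hμ
  have : IsProbabilityMeasure μ := Measure.isProbabilityMeasure_map hm.aemeasurable
  have hcdf : ⇑(cdf μ) = F := by
    funext x
    rw [hF, cdf_eq_real, Measure.real, hμ, Measure.map_apply hm measurableSet_Iic]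
    rfl
  obtain ⟨hatom, hIcc⟩ := noAtoms_and_Icc_of_continuous_cdf μ (hcdf ▸ hFcont)
  have hne : ∀ x, ∀ᵐ ω ∂P, ε₀ ω / σ ≠ x := by
    intro x
    have h := hatom x
    rw [hμ, Measure.map_apply hm (measurableSet_singleton x)] at h
    exact measure_eq_zero_iff_ae_notMem.1 h
  have hlim : (P {ω | ql ≤ ε₀ ω / σ ∧ ε₀ ω / σ ≤ qu}).toReal = 1 - α := by
    have h := hIcc ql qu hq.le
    rw [hμ, Measure.map_apply hm measurableSet_Icc, ← hμ, hcdf, hFl, hFu] at h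
    exact h.trans (by ring)
  rw [← hlim]
  refine tendsto_of_subseq_tendsto fun ns hns => ?_
  obtain ⟨m₁, hm₁, hD₁⟩ := TendstoInMeasure.exists_seq_tendsto_ae
    (f := fun n => D (ns n)) (fun η hη => (hDconv η hη).comp hns)
  obtain ⟨m₂, hm₂, hS₂⟩ := TendstoInMeasure.exists_seq_tendsto_ae
    (f := fun n => S (ns (m₁ n)))
    (fun η hη => (hSconv η hη).comp (hns.comp hm₁.tendsto_atTop))
  refine ⟨fun n => m₁ (m₂ n), ?_⟩
  refine (ENNReal.tendsto_toReal (measure_ne_top P _)).comp ?_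
  refine tendsto_measure_of_ae_tendsto_indicator_of_isFiniteMeasure atTop
    ((measurableSet_le measurable_const hm).inter (measurableSet_le hm measurable_const))
    (fun n => (measurableSet_le ((hS _).const_mul ql) (hε₀.add (hD _))).inter
      (measurableSet_le (hε₀.add (hD _)) ((hS _).const_mul qu))) ?_
  filter_upwards [hD₁, hS₂, hne ql, hne qu] with ω hd hs hl hu
  exact eventually_mem_interval_iff hσ hl hu (hd.comp hm₂.tendsto_atTop) hs
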